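/- Let λ : ℝ → ℝ be nonnegative on (0,∞), let f, g : ℝ → ℝ, let x₀ ∈ ℝ and let C ∈ (0,1/2]. Assume that for every k ∈ (0,1] there exists ε₀ > 0 such that for all ε with 0 < ε < ε₀ and all δ with |δ| ≤ ε one has |(f(x₀+δ) − f(x₀)) − (g(x₀+δ) − g(x₀))| ≤ k·λ(ε). Suppose (εₙ) is a sequence of positive reals tending to 0 such that λ(εₙ)/εₙ² converges to a finite limit K, and (δₙ) is a sequence with C·εₙ ≤ |δₙ| ≤ εₙ/2 for all n. Then the difference of second forward difference quotients ((f(x₀+2δₙ) − 2f(x₀+δₙ) + f(x₀))/δₙ²) − ((g(x₀+2δₙ) − 2g(x₀+δₙ) + g(x₀))/δₙ²) tends to 0 as n → ∞. -/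

import Mathlib

open Filter Topology

open Asymptotics
open scoped fwdDiff

/- A forward difference of order `n ≥ 1` is a fixed integer combination of the first differences
over the steps `k • δ` with `k ≤ n`. As long as `‖δ‖ ≤ ε / n`, each of these steps stays in the
region of size `ε`, where refinability of the measurements makes the first differences of `f` and
`g` agree up to `o(lam ε)`. Hence so do their differences of order `n`, and `lam ε = O(ε ^ p)`
together with `C * ε ≤ ‖δ‖` turns this error into `o(‖δ‖ ^ p)`. -/

theorem sum_neg_one_pow_sub_mul_choose {n : ℕ} (hn : n ≠ 0) :
    ∑ k ∈ Finset.range (n + 1), (-1 : ℤ) ^ (n - k) * n.choose k = 0 := by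
  simpa [hn] using (add_pow (1 : ℤ) (-1) n).symm

theorem fwdDiff_iter_eq_sum_fwdDiff {M G : Type*} [AddCommMonoid M] [AddCommGroup G] (h : M)
    (f : M → G) {n : ℕ} (hn : n ≠ 0) (x : M) :
    Δ_[h] ^[n] f x =
      ∑ k ∈ Finset.range (n + 1), ((-1 : ℤ) ^ (n - k) * n.choose k) • Δ_[k • h] f x := by
  simp only [fwdDiff, smul_sub, Finset.sum_sub_distrib]
  rw [← Finset.sum_smul, sum_neg_one_pow_sub_mul_choose hn, zero_smul, sub_zero,
    ← fwdDiff_iter_eq_sum_shift]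

theorem fwdDiff_iter_two {M G : Type*} [AddCommMonoid M] [AddCommGroup G] (h : M) (f : M → G)
    (x : M) : Δ_[h] ^[2] f x = f (x + 2 • h) - 2 • f (x + h) + f x := by
  simp only [Function.iterate_succ, Function.iterate_zero, Function.comp_apply, id_eq, fwdDiff,
    two_nsmul, add_assoc]
  abel

section RefinablyClose

variable {ι E F : Type*} [SeminormedAddCommGroup E] [SeminormedAddCommGroup F]

/-- Increments of `f` and `g` from `x₀` are indistinguishable by refinable measurements with error
function `lam`: after refinement by any factor `k ∈ (0, 1]`, they agree up to `k * lam ε` on the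
`ε`-ball, for all sufficiently small `ε`. How small `ε` must be may depend on `k`. -/
def RefinablyClose (lam : ℝ → ℝ) (f g : E → F) (x₀ : E) : Prop :=
  ∀ k : ℝ, 0 < k → k ≤ 1 → ∃ ε₀ > 0, ∀ ε : ℝ, 0 < ε → ε < ε₀ →
    ∀ δ : E, ‖δ‖ ≤ ε → ‖Δ_[δ] f x₀ - Δ_[δ] g x₀‖ ≤ k * lam ε

variable {lam : ℝ → ℝ} {f g : E → F} {x₀ : E} {l : Filter ι} {ε : ι → ℝ} {δ : ι → E}

theorem RefinablyClose.isLittleO_fwdDiff_sub (hfg : RefinablyClose lam f g x₀)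
    (hε : Tendsto ε l (𝓝[>] 0)) (hδ : ∀ᶠ i in l, ‖δ i‖ ≤ ε i) :
    (fun i ↦ Δ_[δ i] f x₀ - Δ_[δ i] g x₀) =o[l] fun i ↦ lam (ε i) := by
  refine IsLittleO.of_bound fun c hc ↦ ?_
  obtain ⟨ε₀, hε₀, hbound⟩ := hfg (min c 1) (lt_min hc one_pos) (min_le_right c 1)
  filter_upwards [hε (Ioo_mem_nhdsGT hε₀), hδ] with i ⟨hεpos, hεlt⟩ hδi
  calc ‖Δ_[δ i] f x₀ - Δ_[δ i] g x₀‖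
      ≤ min c 1 * lam (ε i) := hbound (ε i) hεpos hεlt (δ i) hδi
    _ ≤ min c 1 * ‖lam (ε i)‖ := by gcongr; exact Real.le_norm_self _
    _ ≤ c * ‖lam (ε i)‖ := by gcongr; exact min_le_left c 1

theorem RefinablyClose.isLittleO_fwdDiff_iter_sub (hfg : RefinablyClose lam f g x₀)
    (hε : Tendsto ε l (𝓝[>] 0)) {n : ℕ} (hn : n ≠ 0) (hδ : ∀ᶠ i in l, n * ‖δ i‖ ≤ ε i) :
    (fun i ↦ Δ_[δ i] ^[n] f x₀ - Δ_[δ i] ^[n] g x₀) =o[l] fun i ↦ lam (ε i) := by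
  simp only [fwdDiff_iter_eq_sum_fwdDiff _ _ hn, ← Finset.sum_sub_distrib, ← smul_sub]
  refine IsLittleO.fun_sum fun k hk ↦ ?_
  have step_le : ∀ᶠ i in l, ‖k • δ i‖ ≤ ε i := by
    filter_upwards [hδ] with i hi
    calc ‖k • δ i‖ ≤ k * ‖δ i‖ := norm_nsmul_le
      _ ≤ n * ‖δ i‖ := by gcongr; exact Finset.mem_range_succ_iff.mp hk
      _ ≤ ε i := hi
  exact (IsBigO.of_bound _ (.of_forall fun _ ↦ norm_zsmul_le _ _)).trans_isLittleO
    (hfg.isLittleO_fwdDiff_sub hε step_le)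

theorem stmt1_general (hfg : RefinablyClose lam f g x₀) (hε : Tendsto ε l (𝓝[>] 0)) {p : ℕ}
    (hlam : (fun i ↦ lam (ε i)) =O[l] fun i ↦ ε i ^ p) {n : ℕ} (hn : n ≠ 0) {C : ℝ} (hC : 0 < C)
    (hδ : ∀ᶠ i in l, C * ε i ≤ ‖δ i‖ ∧ ‖δ i‖ ≤ ε i / n) :
    (fun i ↦ Δ_[δ i] ^[n] f x₀ - Δ_[δ i] ^[n] g x₀) =o[l] fun i ↦ ‖δ i‖ ^ p := by
  have hε_isBigO : ε =O[l] fun i ↦ ‖δ i‖ := by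
    refine .of_bound C⁻¹ ?_
    filter_upwards [hδ, hε self_mem_nhdsWithin] with i hδi hεpos
    rw [Real.norm_of_nonneg (le_of_lt hεpos), norm_norm, le_inv_mul_iff₀ hC]
    exact hδi.1
  have steps_le : ∀ᶠ i in l, n * ‖δ i‖ ≤ ε i := by
    filter_upwards [hδ] with i hδi
    exact (le_div_iff₀' (by positivity)).mp hδi.2
  exact (hfg.isLittleO_fwdDiff_iter_sub hε hn steps_le).trans_isBigO (hlam.trans (hε_isBigO.pow p))

end RefinablyClose

/-- Analytic core of Lemma 3: under refinable measurement errors with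
`λ(εₙ)/εₙ² → K < ∞` along a sequence `εₙ → 0⁺`, the second forward difference
quotients of `f` and `g` at `x₀` agree in the limit. -/
theorem stmt1 (lam : ℝ → ℝ) (hlam : ∀ ε > 0, 0 ≤ lam ε)
    (f g : ℝ → ℝ) (x₀ : ℝ) (C : ℝ) (hC : 0 < C ∧ C ≤ 1 / 2)
    (hclose : ∀ k : ℝ, 0 < k → k ≤ 1 → ∃ ε₀ > 0, ∀ ε : ℝ, 0 < ε → ε < ε₀ →
      ∀ δ : ℝ, |δ| ≤ ε →
        |(f (x₀ + δ) - f x₀) - (g (x₀ + δ) - g x₀)| ≤ k * lam ε)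
    (ε : ℕ → ℝ) (hεpos : ∀ n, 0 < ε n) (hε0 : Tendsto ε atTop (𝓝 0))
    (K : ℝ) (hK : Tendsto (fun n => lam (ε n) / (ε n) ^ 2) atTop (𝓝 K))
    (δ : ℕ → ℝ) (hδ : ∀ n, C * ε n ≤ |δ n| ∧ |δ n| ≤ ε n / 2) :
    Tendsto (fun n =>
        (f (x₀ + 2 * δ n) - 2 * f (x₀ + δ n) + f x₀) / (δ n) ^ 2 -
        (g (x₀ + 2 * δ n) - 2 * g (x₀ + δ n) + g x₀) / (δ n) ^ 2)
      atTop (𝓝 0) := by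
  have hlam_isBigO : (fun n ↦ lam (ε n)) =O[atTop] fun n ↦ ε n ^ 2 :=
    isBigO_of_div_tendsto_nhds (.of_forall fun n h ↦ absurd h (pow_pos (hεpos n) 2).ne') K hK
  have second_diff := stmt1_general (f := f) (g := g) hclose
    (tendsto_nhdsWithin_iff.mpr ⟨hε0, .of_forall hεpos⟩) hlam_isBigO two_ne_zero hC.1
    (.of_forall hδ)
  simpa [fwdDiff_iter_two, sub_div] using second_diff.tendsto_div_nhds_zero
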